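/- Energy monotonicity (pointwise form): let (α, ψ) be a classical solution of (P)_λ with λ > 0 and σ₁(α,ψ) > 0, and let η ∈ C²(Ω̄), η = 0 on ∂Ω, satisfy −Δη = λp ρ_λ^{1/q} [η]_λ + p ρ_λ^{1/q} [ψ]_λ in Ω. Then ∫_Ω ρ_λ^{1/q} [η]_λ [ψ]_λ ≥ 0 and ∫_Ω ρ_λ η = λp ∫_Ω ρ_λ^{1/q} [η]_λ [ψ]_λ + p ∫_Ω ρ_λ^{1/q} [ψ]_λ² > 0. -/

import Mathlib

/-!
Write `w = ρ_λ^{1/q}`. Since `∫ w [φ]_λ = 0`, testing the equation of `η` with `η` gives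
`∫ |∇η|² = λp ∫ w [η]² + p ∫ w [η][ψ]`, and `σ₁ > 0` gives `λp ∫ w [η]² ≤ ∫ |∇η|²`; hence
`∫ w [η][ψ] ≥ 0`. Green's second identity for `ψ` and `η` gives
`∫ ρ η = ∫ (-Δη) ψ = λp ∫ w [η][ψ] + p ∫ w [ψ]²`. The last term is positive: otherwise `ψ` would
be constant on the nonempty open set `{α + λψ > 0}`, where `-Δψ = ρ > 0` (`wdenom_sol_pos`).

Neither Green's formula nor the spectral inequality needs boundary regularity here. A function
`u` that is `C²` inside, continuous up to the boundary and zero on it is replaced by `G_ε(u)`, with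
`G_ε` a `C¹` truncation of the identity that vanishes on `[-ε, ε]` and satisfies `0 ≤ G_ε' ≤ 1`.
This is a compactly supported `C¹` function, so integration by parts is elementary (`ibp_cpt`).
Letting `ε → 0`, Fatou's lemma bounds the Dirichlet energy (`integrable_grad`) and dominated
convergence gives Green's identity (`green`); both use that `∇u = 0` almost everywhere on
`{u = 0}` (`ae_fderiv_eq_zero`). The spectral inequality passes from test functions to
`C¹` functions of compact support by mollification (`spectral_C1`), and then to `u`, because
`|∇ G_ε(u)| ≤ |∇u|` (`spectral_nice`).
-/

open MeasureTheory Set Filter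

noncomputable section

abbrev Euc (N : ℕ) := EuclideanSpace ℝ (Fin N)

/-- The Laplacian as the sum of second partial derivatives. -/
def lap {N : ℕ} (f : Euc N → ℝ) (x : Euc N) : ℝ :=
  ∑ i : Fin N,
    fderiv ℝ (fun y => fderiv ℝ f y (EuclideanSpace.single i 1)) x (EuclideanSpace.single i 1)

/-- A bounded domain of class `C³`, described by a `C³` defining function. -/
def IsC3Domain {N : ℕ} (Ω : Set (Euc N)) : Prop :=
  IsOpen Ω ∧ IsConnected Ω ∧ Bornology.IsBounded Ω ∧
    ∃ F : Euc N → ℝ, ContDiff ℝ 3 F ∧ Ω = {x | F x < 0} ∧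
      ∀ x ∈ frontier Ω, fderiv ℝ F x ≠ 0

/-- `ρ_λ = [α+λψ]₊^p`. -/
def rho {N : ℕ} (p lam α : ℝ) (ψ : Euc N → ℝ) (x : Euc N) : ℝ :=
  (max (α + lam * ψ x) 0) ^ p

/-- `ρ_λ^{1/q} = [α+λψ]₊^{p-1}`. -/
def rhoq {N : ℕ} (p lam α : ℝ) (ψ : Euc N → ℝ) (x : Euc N) : ℝ :=
  (max (α + lam * ψ x) 0) ^ (p - 1)

/-- `(α, ψ)` is a classical solution of the constrained problem `(P)_λ` on `Ω`. -/
def SolP {N : ℕ} (Ω : Set (Euc N)) (p lam α : ℝ) (ψ : Euc N → ℝ) : Prop :=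
  ContinuousOn ψ (closure Ω) ∧ ContDiffOn ℝ 2 ψ Ω ∧
    (∀ x ∈ frontier Ω, ψ x = 0) ∧
    (∀ x ∈ Ω, -lap ψ x = rho p lam α ψ x) ∧
    ∫ x in Ω, rho p lam α ψ x = 1

/-- The weighted average `⟨φ⟩_λ`. -/
def avgl {N : ℕ} (Ω : Set (Euc N)) (p lam α : ℝ) (ψ φ : Euc N → ℝ) : ℝ :=
  (∫ x in Ω, rhoq p lam α ψ x * φ x) / ∫ x in Ω, rhoq p lam α ψ x

/-- `[φ]_λ = φ - ⟨φ⟩_λ`. -/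
def brk {N : ℕ} (Ω : Set (Euc N)) (p lam α : ℝ) (ψ φ : Euc N → ℝ) (x : Euc N) : ℝ :=
  φ x - avgl Ω p lam α ψ φ

/-- `φ ∈ C_c^∞(Ω)`. -/
def TestFun {N : ℕ} (Ω : Set (Euc N)) (φ : Euc N → ℝ) : Prop :=
  ContDiff ℝ (⊤ : ℕ∞) φ ∧ HasCompactSupport φ ∧ tsupport φ ⊆ Ω

/-- `∫_Ω ρ_λ^{1/q} [φ]_λ²`. -/
def wdenom {N : ℕ} (Ω : Set (Euc N)) (p lam α : ℝ) (ψ φ : Euc N → ℝ) : ℝ :=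
  ∫ x in Ω, rhoq p lam α ψ x * brk Ω p lam α ψ φ x ^ 2

/-- The Rayleigh-type quotient for the linearized problem. -/
def rayleigh {N : ℕ} (Ω : Set (Euc N)) (p lam α : ℝ) (ψ φ : Euc N → ℝ) : ℝ :=
  ((∫ x in Ω, ‖fderiv ℝ φ x‖ ^ 2) - lam * p * wdenom Ω p lam α ψ φ) / wdenom Ω p lam α ψ φ

/-- The weighted first eigenvalue `σ₁(α,ψ)`. -/
def sigma1 {N : ℕ} (Ω : Set (Euc N)) (p lam α : ℝ) (ψ : Euc N → ℝ) : ℝ :=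
  sInf {s | ∃ φ : Euc N → ℝ, TestFun Ω φ ∧ 0 < wdenom Ω p lam α ψ φ ∧
    s = rayleigh Ω p lam α ψ φ}

/-- The stability threshold `λ*(Ω,p)`. -/
def lamStar {N : ℕ} (Ω : Set (Euc N)) (p : ℝ) : ℝ :=
  sSup {lb : ℝ | 0 < lb ∧ ∀ lam α ψ, 0 ≤ lam → lam < lb → SolP Ω p lam α ψ →
    0 < sigma1 Ω p lam α ψ}

/-- The positivity threshold `λ₊(Ω,p)`. -/
def lamPlusD {N : ℕ} (Ω : Set (Euc N)) (p : ℝ) : ℝ :=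
  sSup {d : ℝ | 0 < d ∧ ∀ lam α ψ, 0 ≤ lam → lam < d → SolP Ω p lam α ψ → 0 < α}

/-- The Sobolev-type constant `Λ(Ω,t)`. -/
def LambdaC {N : ℕ} (Ω : Set (Euc N)) (t : ℝ) : ℝ :=
  sInf {s : ℝ | ∃ w : Euc N → ℝ, TestFun Ω w ∧ w ≠ 0 ∧
    s = (∫ x in Ω, ‖fderiv ℝ w x‖ ^ 2) / (∫ x in Ω, |w x| ^ t) ^ (2 / t)}

open Topology

/-! ### Integration by parts with compact support -/

/-- The pointwise product `∇a · ∇b`, in coordinates. -/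
def gdot {N : ℕ} (a b : Euc N → ℝ) (x : Euc N) : ℝ :=
  ∑ i : Fin N, fderiv ℝ a x (EuclideanSpace.single i 1) * fderiv ℝ b x (EuclideanSpace.single i 1)

lemma sum_clm_sq {N : ℕ} (L : Euc N →L[ℝ] ℝ) :
    ∑ i : Fin N, L (EuclideanSpace.single i 1) * L (EuclideanSpace.single i 1) = ‖L‖ ^ 2 := by
  obtain ⟨y, rfl⟩ := (InnerProductSpace.toDual ℝ (Euc N)).surjective L
  rw [LinearIsometryEquiv.norm_map, EuclideanSpace.norm_sq_eq]
  simp [InnerProductSpace.toDual_apply_apply, EuclideanSpace.inner_single_right, sq]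

lemma gdot_self {N : ℕ} (a : Euc N → ℝ) (x : Euc N) : gdot a a x = ‖fderiv ℝ a x‖ ^ 2 :=
  sum_clm_sq _

lemma gdot_comm {N : ℕ} (a b : Euc N → ℝ) (x : Euc N) : gdot a b x = gdot b a x := by
  simp [gdot, mul_comm]

lemma abs_gdot_le {N : ℕ} (a b : Euc N → ℝ) (x : Euc N) :
    |gdot a b x| ≤ ‖fderiv ℝ a x‖ ^ 2 + ‖fderiv ℝ b x‖ ^ 2 := by
  rw [← gdot_self, ← gdot_self, gdot, gdot, gdot, ← Finset.sum_add_distrib]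
  refine (Finset.abs_sum_le_sum_abs _ _).trans (Finset.sum_le_sum fun i _ => ?_)
  rw [abs_le]
  constructor <;> nlinarith [sq_nonneg (fderiv ℝ a x (EuclideanSpace.single i 1) -
    fderiv ℝ b x (EuclideanSpace.single i 1)), sq_nonneg (fderiv ℝ a x (EuclideanSpace.single i 1) +
    fderiv ℝ b x (EuclideanSpace.single i 1))]

lemma continuousOn_fderiv_of_C2 {N : ℕ} {Ω : Set (Euc N)} (hΩ : IsOpen Ω) {u : Euc N → ℝ}
    (hu : ContDiffOn ℝ 2 u Ω) : ContinuousOn (fderiv ℝ u) Ω :=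
  hu.continuousOn_fderiv_of_isOpen hΩ (by norm_num)

lemma continuousOn_gdot {N : ℕ} {Ω : Set (Euc N)} (hΩ : IsOpen Ω) {u v : Euc N → ℝ}
    (hu : ContDiffOn ℝ 2 u Ω) (hv : ContDiffOn ℝ 2 v Ω) : ContinuousOn (gdot u v) Ω := by
  unfold gdot
  have h1 := continuousOn_fderiv_of_C2 hΩ hu
  have h2 := continuousOn_fderiv_of_C2 hΩ hv
  fun_prop

/-- A continuous function on an open set, multiplied by a continuous function compactly supported
in that set, is integrable (the values of the first function off the set do not matter). -/
lemma integrable_cpt_mul {N : ℕ} {Ω : Set (Euc N)} (hΩ : IsOpen Ω) {φ f : Euc N → ℝ}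
    (hφ : Continuous φ) (hc : HasCompactSupport φ) (hs : tsupport φ ⊆ Ω)
    (hf : ContinuousOn f Ω) : Integrable (fun x => φ x * f x) := by
  have hcont : Continuous (fun x => φ x * f x) := by
    refine continuous_of_tsupport ?_
    intro x hx
    have hx' : x ∈ tsupport φ := tsupport_mul_subset_left hx
    exact hφ.continuousAt.mul (hf.continuousAt (hΩ.mem_nhds (hs hx')))
  exact hcont.integrable_of_hasCompactSupport hc.mul_right

/-- Integration by parts against a compactly supported `C¹` function. -/
lemma ibp_cpt {N : ℕ} {Ω : Set (Euc N)} (hΩ : IsOpen Ω) {u φ : Euc N → ℝ}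
    (hu : ContDiffOn ℝ 2 u Ω) (hφ : ContDiff ℝ 1 φ) (hc : HasCompactSupport φ)
    (hs : tsupport φ ⊆ Ω) :
    ∫ x in Ω, φ x * (-lap u x) = ∫ x in Ω, gdot φ u x := by
  have hdu : ContDiffOn ℝ 1 (fderiv ℝ u) Ω := hu.fderiv_of_isOpen hΩ (by norm_num)
  have hdφ : Continuous (fderiv ℝ φ) := hφ.continuous_fderiv (by norm_num)
  have hpart : ∀ i : Fin N,
      ContDiffOn ℝ 1 (fun y => fderiv ℝ u y (EuclideanSpace.single i 1)) Ω :=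
    fun i => hdu.clm_apply contDiffOn_const
  have hI1 : ∀ i : Fin N, Integrable (fun x => fderiv ℝ φ x (EuclideanSpace.single i 1) *
      fderiv ℝ u x (EuclideanSpace.single i 1)) := fun i =>
    integrable_cpt_mul hΩ (by fun_prop) (hc.fderiv_apply ℝ _)
      ((tsupport_fderiv_apply_subset ℝ _).trans hs) (hpart i).continuousOn
  have hI2 : ∀ i : Fin N, Integrable (fun x => φ x *
      fderiv ℝ (fun y => fderiv ℝ u y (EuclideanSpace.single i 1)) x
        (EuclideanSpace.single i 1)) := fun i =>
    integrable_cpt_mul hΩ hφ.continuous hc hs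
      (((hpart i).continuousOn_fderiv_of_isOpen hΩ le_rfl).clm_apply continuousOn_const)
  have hI3 : ∀ i : Fin N, Integrable (fun x => φ x *
      fderiv ℝ u x (EuclideanSpace.single i 1)) := fun i =>
    integrable_cpt_mul hΩ hφ.continuous hc hs (hpart i).continuousOn
  have key : ∀ i : Fin N, ∫ x, φ x *
      fderiv ℝ (fun y => fderiv ℝ u y (EuclideanSpace.single i 1)) x (EuclideanSpace.single i 1)
      = - ∫ x, fderiv ℝ φ x (EuclideanSpace.single i 1) *
          fderiv ℝ u x (EuclideanSpace.single i 1) := fun i =>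
    integral_mul_fderiv_eq_neg_fderiv_mul_of_integrable (hI1 i) (hI2 i) (hI3 i)
      (fun x _ => (hφ.differentiable (by norm_num)).differentiableAt)
      (fun x hx => ((hpart i).differentiableOn (by norm_num)).differentiableAt
        (hΩ.mem_nhds (hs hx)))
  have hz1 : ∫ x in Ω, φ x * (-lap u x) = ∫ x, φ x * (-lap u x) := by
    refine setIntegral_eq_integral_of_forall_compl_eq_zero fun x hx => ?_
    rw [image_eq_zero_of_notMem_tsupport fun h => hx (hs h), zero_mul]
  have hz2 : ∫ x in Ω, gdot φ u x = ∫ x, gdot φ u x := by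
    refine setIntegral_eq_integral_of_forall_compl_eq_zero fun x hx => ?_
    have : fderiv ℝ φ x = 0 :=
      image_eq_zero_of_notMem_tsupport fun h => hx (hs (tsupport_fderiv_subset ℝ h))
    simp [gdot, this]
  rw [hz1, hz2]
  simp only [gdot, lap, mul_neg, Finset.mul_sum]
  rw [integral_neg, integral_finsetSum _ fun i _ => hI2 i, integral_finsetSum _ fun i _ => hI1 i]
  simp [key]

/-- At almost every zero of a differentiable function its derivative vanishes. -/
lemma ae_fderiv_eq_zero {N : ℕ} (hN : 2 ≤ N) {Ω : Set (Euc N)} (hΩ : IsOpen Ω) {u : Euc N → ℝ}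
    (hu : ContDiffOn ℝ 2 u Ω) :
    ∀ᵐ x ∂(volume.restrict Ω), u x = 0 → fderiv ℝ u x = 0 := by
  set e : Euc N := EuclideanSpace.single ⟨0, by omega⟩ 1 with he
  set s : Set (Euc N) := {x ∈ Ω | u x = 0} with hs
  have hsm : MeasurableSet s := by
    have : s = Ω \ (Ω ∩ u ⁻¹' {0}ᶜ) := by ext x; simp [hs]
    rw [this]
    exact hΩ.measurableSet.diff
      (hu.continuousOn.isOpen_inter_preimage hΩ isOpen_compl_singleton).measurableSet
  have happ : ApproximatesLinearOn (fun x => u x • e) (0 : Euc N →L[ℝ] Euc N) s 0 := by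
    intro x hx y hy
    simp [hx.2, hy.2]
  have h := happ.norm_fderiv_sub_le (μ := volume) hsm
    (fun x => (fderiv ℝ u x).smulRight e) (fun x hx => by
      have hd : DifferentiableAt ℝ u x :=
        (hu.differentiableOn (by norm_num)).differentiableAt (hΩ.mem_nhds hx.1)
      exact (hd.hasFDerivAt.smul_const e).hasFDerivWithinAt)
  rw [ae_restrict_iff' hsm] at h
  rw [ae_restrict_iff' hΩ.measurableSet]
  filter_upwards [h] with x hx hxΩ hux
  have h1 := hx ⟨hxΩ, hux⟩
  have h2 : fderiv ℝ u x = 0 ∨ e = 0 := by simpa using h1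
  exact h2.resolve_right (by simp [he])

/-! ### Truncation of the identity -/

/-- A continuous cut-off with values in `[0,1]`, zero on `[-ε, ε]` and one off `[-2ε, 2ε]`. -/
def cutoff (ε s : ℝ) : ℝ := max 0 (min 1 (|s| / ε - 1))

/-- The primitive of `cutoff ε`: a `C¹` truncation of the identity vanishing on `[-ε, ε]`. -/
def trunc (ε t : ℝ) : ℝ := ∫ s in (0 : ℝ)..t, cutoff ε s

lemma continuous_cutoff (ε : ℝ) : Continuous (cutoff ε) := by
  unfold cutoff; fun_prop

lemma cutoff_nonneg (ε s : ℝ) : 0 ≤ cutoff ε s := le_max_left _ _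

lemma cutoff_le_one (ε s : ℝ) : cutoff ε s ≤ 1 := max_le zero_le_one (min_le_left _ _)

lemma cutoff_zero (ε : ℝ) : cutoff ε 0 = 0 := by simp [cutoff]

lemma cutoff_eq_zero {ε s : ℝ} (hε : 0 < ε) (hs : |s| ≤ ε) : cutoff ε s = 0 := by
  have : |s| / ε ≤ 1 := (div_le_one hε).2 hs
  exact max_eq_left ((min_le_right _ _).trans (by linarith))

lemma cutoff_eq_one {ε s : ℝ} (hε : 0 < ε) (hs : 2 * ε ≤ |s|) : cutoff ε s = 1 := by
  have : 2 ≤ |s| / ε := (le_div_iff₀ hε).2 hs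
  unfold cutoff
  rw [min_eq_left (by linarith), max_eq_right zero_le_one]

lemma hasDerivAt_trunc (ε t : ℝ) : HasDerivAt (trunc ε) (cutoff ε t) t :=
  (continuous_cutoff ε).integral_hasStrictDerivAt 0 t |>.hasDerivAt

lemma contDiff_trunc (ε : ℝ) : ContDiff ℝ 1 (trunc ε) := by
  rw [contDiff_one_iff_deriv]
  refine ⟨fun t => (hasDerivAt_trunc ε t).differentiableAt, ?_⟩
  have : deriv (trunc ε) = cutoff ε := funext fun t => (hasDerivAt_trunc ε t).deriv
  rw [this]; exact continuous_cutoff ε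

lemma abs_trunc_le (ε t : ℝ) : |trunc ε t| ≤ |t| := by
  have := intervalIntegral.norm_integral_le_of_norm_le_const (a := 0) (b := t) (f := cutoff ε)
    (C := 1) (fun x _ => by
      rw [Real.norm_of_nonneg (cutoff_nonneg _ _)]; exact cutoff_le_one _ _)
  simpa [trunc] using this

lemma trunc_eq_zero {ε t : ℝ} (hε : 0 < ε) (ht : |t| ≤ ε) : trunc ε t = 0 := by
  refine intervalIntegral.integral_zero_ae (Eventually.of_forall fun s hs => cutoff_eq_zero hε ?_)
  have : s ∈ uIcc 0 t := uIoc_subset_uIcc hs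
  have h2 := abs_sub_left_of_mem_uIcc this
  simp only [sub_zero] at h2
  exact h2.trans ht

/-- The sequence of truncation levels. -/
def lvl (n : ℕ) : ℝ := 1 / ((n : ℝ) + 1)

lemma lvl_pos (n : ℕ) : 0 < lvl n := by unfold lvl; positivity

lemma tendsto_lvl : Tendsto lvl atTop (𝓝 0) := tendsto_one_div_add_atTop_nhds_zero_nat

lemma tendsto_cutoff {s : ℝ} (hs : s ≠ 0) :
    Tendsto (fun n => cutoff (lvl n) s) atTop (𝓝 1) := by
  refine tendsto_const_nhds.congr' ?_
  have h : ∀ᶠ n in atTop, lvl n < |s| / 2 :=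
    tendsto_lvl.eventually_lt_const (by positivity)
  filter_upwards [h] with n hn
  exact (cutoff_eq_one (lvl_pos n) (by linarith)).symm

lemma tendsto_trunc (t : ℝ) : Tendsto (fun n => trunc (lvl n) t) atTop (𝓝 t) := by
  have h : Tendsto (fun n => ∫ s in (0 : ℝ)..t, cutoff (lvl n) s) atTop
      (𝓝 (∫ _s in (0 : ℝ)..t, (1 : ℝ))) := by
    refine intervalIntegral.tendsto_integral_filter_of_dominated_convergence (fun _ => 1)
      (Eventually.of_forall fun n => (continuous_cutoff _).aestronglyMeasurable)
      (Eventually.of_forall fun n => Eventually.of_forall fun s _ => ?_)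
      (by simp) ?_
    · rw [Real.norm_of_nonneg (cutoff_nonneg _ _)]; exact cutoff_le_one _ _
    · have : ∀ᵐ s : ℝ, s ≠ 0 := by simp [ae_iff]
      filter_upwards [this] with s hs _ using tendsto_cutoff hs
  simpa [trunc] using h

/-! ### Green's identity -/

/-- The class of functions to which Green's formula is applied: `C²` inside, continuous up to the
boundary, zero on the boundary, and with a Laplacian that extends continuously to the closure. -/
structure Nice {N : ℕ} (Ω : Set (Euc N)) (u f : Euc N → ℝ) : Prop where
  smooth : ContDiffOn ℝ 2 u Ω
  cont : ContinuousOn u (closure Ω)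
  bdry : ∀ x ∈ frontier Ω, u x = 0
  eqn : ∀ x ∈ Ω, -lap u x = f x
  rhs : ContinuousOn f (closure Ω)

/-- The truncation of `u` at level `ε`, extended by zero outside `Ω`. -/
def tru {N : ℕ} (Ω : Set (Euc N)) (ε : ℝ) (u : Euc N → ℝ) : Euc N → ℝ :=
  Ω.indicator fun x => trunc ε (u x)

section
variable {N : ℕ} {Ω : Set (Euc N)} {u f v g : Euc N → ℝ} {ε : ℝ}

lemma tsupport_tru (hΩ : IsOpen Ω) (hu : Nice Ω u f) (hε : 0 < ε) :
    tsupport (tru Ω ε u) ⊆ Ω := by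
  have hcl : IsClosed (closure Ω ∩ u ⁻¹' {t | ε ≤ |t|}) :=
    hu.cont.preimage_isClosed_of_isClosed isClosed_closure
      (isClosed_le continuous_const continuous_abs)
  have h1 : tsupport (tru Ω ε u) ⊆ closure Ω ∩ u ⁻¹' {t | ε ≤ |t|} := by
    refine closure_minimal ?_ hcl
    intro x hx
    have hxΩ : x ∈ Ω := by
      by_contra h
      exact hx (indicator_of_notMem h _)
    refine ⟨subset_closure hxΩ, ?_⟩
    by_contra h
    apply hx
    rw [tru, indicator_of_mem hxΩ]
    exact trunc_eq_zero hε (not_le.1 h).le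
  intro x hx
  obtain ⟨hxc, hxu⟩ := h1 hx
  by_contra hxΩ
  have hfr : x ∈ frontier Ω := by rw [hΩ.frontier_eq]; exact ⟨hxc, hxΩ⟩
  have : ε ≤ |u x| := hxu
  rw [hu.bdry x hfr, abs_zero] at this
  linarith

lemma hasCompactSupport_tru (hΩ : IsOpen Ω) (hb : Bornology.IsBounded Ω) (hu : Nice Ω u f)
    (hε : 0 < ε) : HasCompactSupport (tru Ω ε u) :=
  Metric.isCompact_of_isClosed_isBounded (isClosed_tsupport _)
    (hb.subset (tsupport_tru hΩ hu hε))

lemma tru_eventuallyEq (hΩ : IsOpen Ω) {x : Euc N} (hx : x ∈ Ω) :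
    tru Ω ε u =ᶠ[𝓝 x] fun y => trunc ε (u y) := by
  filter_upwards [hΩ.mem_nhds hx] with y hy
  exact indicator_of_mem hy _

lemma contDiff_tru (hΩ : IsOpen Ω) (hu : Nice Ω u f) (hε : 0 < ε) :
    ContDiff ℝ 1 (tru Ω ε u) := by
  refine contDiff_iff_contDiffAt.2 fun x => ?_
  by_cases hx : x ∈ tsupport (tru Ω ε u)
  swap
  · exact contDiffAt_const.congr_of_eventuallyEq (notMem_tsupport_iff_eventuallyEq.1 hx)
  have hxΩ := tsupport_tru hΩ hu hε hx
  refine ContDiffAt.congr_of_eventuallyEq ?_ (tru_eventuallyEq hΩ hxΩ)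
  exact (contDiff_trunc ε).contDiffAt.comp x
    ((hu.smooth.contDiffAt (hΩ.mem_nhds hxΩ)).of_le (by norm_num))

lemma fderiv_tru (hΩ : IsOpen Ω) (hu : Nice Ω u f) {x : Euc N} (hx : x ∈ Ω) :
    fderiv ℝ (tru Ω ε u) x = cutoff ε (u x) • fderiv ℝ u x := by
  rw [(tru_eventuallyEq hΩ hx).fderiv_eq]
  have hd : DifferentiableAt ℝ u x :=
    (hu.smooth.differentiableOn (by norm_num)).differentiableAt (hΩ.mem_nhds hx)
  exact ((hasDerivAt_trunc ε (u x)).comp_hasFDerivAt x hd.hasFDerivAt).fderiv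

lemma gdot_tru (hΩ : IsOpen Ω) (hu : Nice Ω u f) {x : Euc N} (hx : x ∈ Ω) :
    gdot (tru Ω ε u) v x = cutoff ε (u x) * gdot u v x := by
  simp only [gdot, fderiv_tru hΩ hu hx, Finset.mul_sum]
  refine Finset.sum_congr rfl fun i _ => ?_
  simp [mul_assoc]

/-- Green's identity with the truncation of `v` as test function. -/
lemma green_tru (hΩ : IsOpen Ω) (hb : Bornology.IsBounded Ω) (hu : Nice Ω u f) (hv : Nice Ω v g)
    (hε : 0 < ε) :
    ∫ x in Ω, trunc ε (v x) * f x = ∫ x in Ω, cutoff ε (v x) * gdot v u x := by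
  have h := ibp_cpt hΩ hu.smooth (contDiff_tru hΩ hv hε) (hasCompactSupport_tru hΩ hb hv hε)
    (tsupport_tru hΩ hv hε)
  rw [setIntegral_congr_fun hΩ.measurableSet (g := fun x => trunc ε (v x) * f x)
    (fun x hx => by simp [tru, indicator_of_mem hx, hu.eqn x hx]),
    setIntegral_congr_fun hΩ.measurableSet (g := fun x => cutoff ε (v x) * gdot v u x)
    (fun x hx => gdot_tru hΩ hv hx)] at h
  exact h

lemma exists_bound (hb : Bornology.IsBounded Ω) (hf : ContinuousOn f (closure Ω)) :
    ∃ C : ℝ, 0 ≤ C ∧ ∀ x ∈ Ω, |f x| ≤ C := by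
  have hK : IsCompact (closure Ω) := hb.isCompact_closure
  obtain ⟨C, hC⟩ := hK.exists_bound_of_continuousOn hf
  exact ⟨max C 0, le_max_right _ _, fun x hx => (hC x (subset_closure hx)).trans (le_max_left _ _)⟩

/-- Continuous functions on the closure of a bounded open set are integrable. -/
lemma integrableOn_of_cont (hb : Bornology.IsBounded Ω) (hf : ContinuousOn f (closure Ω)) :
    IntegrableOn f Ω :=
  (hf.integrableOn_compact hb.isCompact_closure).mono_set subset_closure

/-- Solutions in the class `Nice` have finite Dirichlet energy. -/
lemma integrable_grad (hN : 2 ≤ N) (hΩ : IsOpen Ω) (hb : Bornology.IsBounded Ω)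
    (hu : Nice Ω u f) : IntegrableOn (fun x => ‖fderiv ℝ u x‖ ^ 2) Ω := by
  obtain ⟨C, hC0, hC⟩ := exists_bound hb hu.rhs
  obtain ⟨M, hM0, hM⟩ := exists_bound hb hu.cont
  have hcg : ContinuousOn (fun x => ‖fderiv ℝ u x‖ ^ 2) Ω :=
    (continuousOn_fderiv_of_C2 hΩ hu.smooth).norm.pow 2
  have hcu : ContinuousOn u Ω := hu.cont.mono subset_closure
  have hmeas : ∀ n, AEStronglyMeasurable
      (fun x => cutoff (lvl n) (u x) * ‖fderiv ℝ u x‖ ^ 2) (volume.restrict Ω) := fun n =>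
    (((continuous_cutoff _).comp_continuousOn hcu).mul hcg).aestronglyMeasurable hΩ.measurableSet
  have hint : ∀ n, IntegrableOn (fun x => cutoff (lvl n) (u x) * ‖fderiv ℝ u x‖ ^ 2) Ω := by
    intro n
    have h1 := contDiff_tru hΩ hu (lvl_pos n)
    have h2 := hasCompactSupport_tru hΩ hb hu (lvl_pos n)
    have h3 : Integrable (fun x => gdot (tru Ω (lvl n) u) u x) := by
      unfold gdot
      refine integrable_finsetSum _ fun i _ => ?_
      have hdφ : Continuous (fderiv ℝ (tru Ω (lvl n) u)) := h1.continuous_fderiv (by norm_num)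
      exact integrable_cpt_mul hΩ (by fun_prop) (h2.fderiv_apply ℝ _)
        ((tsupport_fderiv_apply_subset ℝ _).trans (tsupport_tru hΩ hu (lvl_pos n)))
        ((continuousOn_fderiv_of_C2 hΩ hu.smooth).clm_apply continuousOn_const)
    refine h3.integrableOn.congr_fun (fun x hx => ?_) hΩ.measurableSet
    simp only [gdot_tru hΩ hu hx, gdot_self]
  have hbd : ∀ n, ∫⁻ x in Ω, ENNReal.ofReal (cutoff (lvl n) (u x) * ‖fderiv ℝ u x‖ ^ 2)
      ≤ ENNReal.ofReal (M * C * volume.real Ω) := by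
    intro n
    rw [← ofReal_integral_eq_lintegral_ofReal (hint n)
      (Eventually.of_forall fun x => mul_nonneg (cutoff_nonneg _ _) (by positivity))]
    refine ENNReal.ofReal_le_ofReal ?_
    have h := green_tru hΩ hb hu hu (lvl_pos n)
    simp only [gdot_self] at h
    rw [← h]
    have hB : ∀ x ∈ Ω, ‖trunc (lvl n) (u x) * f x‖ ≤ M * C := fun x hx => by
      rw [Real.norm_eq_abs, abs_mul]
      exact mul_le_mul ((abs_trunc_le _ _).trans (hM x hx)) (hC x hx) (abs_nonneg _) hM0
    exact (Real.le_norm_self _).trans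
      (norm_setIntegral_le_of_norm_le_const hb.measure_lt_top hB)
  refine ⟨hcg.aestronglyMeasurable hΩ.measurableSet, ?_⟩
  rw [hasFiniteIntegral_iff_ofReal (Eventually.of_forall fun x => by positivity)]
  -- Fatou's lemma along the truncation levels
  have hlim : ∀ᵐ x ∂(volume.restrict Ω), Tendsto (fun n =>
      ENNReal.ofReal (cutoff (lvl n) (u x) * ‖fderiv ℝ u x‖ ^ 2)) atTop
      (𝓝 (ENNReal.ofReal (‖fderiv ℝ u x‖ ^ 2))) := by
    filter_upwards [ae_fderiv_eq_zero hN hΩ hu.smooth] with x hx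
    refine ENNReal.tendsto_ofReal ?_
    by_cases h0 : u x = 0
    · simp [hx h0]
    · simpa using (tendsto_cutoff h0).mul_const (‖fderiv ℝ u x‖ ^ 2)
  calc ∫⁻ x in Ω, ENNReal.ofReal (‖fderiv ℝ u x‖ ^ 2)
      = ∫⁻ x in Ω, liminf (fun n =>
          ENNReal.ofReal (cutoff (lvl n) (u x) * ‖fderiv ℝ u x‖ ^ 2)) atTop :=
        lintegral_congr_ae (hlim.mono fun x hx => hx.liminf_eq.symm)
    _ ≤ liminf (fun n => ∫⁻ x in Ω,
          ENNReal.ofReal (cutoff (lvl n) (u x) * ‖fderiv ℝ u x‖ ^ 2)) atTop :=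
        lintegral_liminf_le' fun n => (hmeas n).aemeasurable.ennreal_ofReal
    _ ≤ ENNReal.ofReal (M * C * volume.real Ω) :=
        (liminf_le_liminf (Eventually.of_forall hbd)).trans (liminf_const _).le
    _ < ⊤ := ENNReal.ofReal_lt_top

/-- Green's first identity in the class `Nice`. -/
lemma green (hN : 2 ≤ N) (hΩ : IsOpen Ω) (hb : Bornology.IsBounded Ω)
    (hu : Nice Ω u f) (hv : Nice Ω v g) :
    ∫ x in Ω, v x * f x = ∫ x in Ω, gdot v u x := by
  have hcv : ContinuousOn v Ω := hv.cont.mono subset_closure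
  have hcf : ContinuousOn f Ω := hu.rhs.mono subset_closure
  have hIu := integrable_grad hN hΩ hb hu
  have hIv := integrable_grad hN hΩ hb hv
  have h1 : Tendsto (fun n => ∫ x in Ω, trunc (lvl n) (v x) * f x) atTop
      (𝓝 (∫ x in Ω, v x * f x)) := by
    refine tendsto_integral_of_dominated_convergence (fun x => |v x| * |f x|)
      (fun n => ((contDiff_trunc _).continuous.comp_continuousOn hcv |>.mul hcf).aestronglyMeasurable
        hΩ.measurableSet)
      (integrableOn_of_cont hb (hv.cont.abs.mul hu.rhs.abs))
      (fun n => Eventually.of_forall fun x => ?_)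
      (Eventually.of_forall fun x => (tendsto_trunc _).mul_const _)
    rw [Real.norm_eq_abs, abs_mul]
    exact mul_le_mul_of_nonneg_right (abs_trunc_le _ _) (abs_nonneg _)
  have h2 : Tendsto (fun n => ∫ x in Ω, cutoff (lvl n) (v x) * gdot v u x) atTop
      (𝓝 (∫ x in Ω, gdot v u x)) := by
    refine tendsto_integral_of_dominated_convergence
      (fun x => ‖fderiv ℝ v x‖ ^ 2 + ‖fderiv ℝ u x‖ ^ 2)
      (fun n => ((continuous_cutoff _).comp_continuousOn hcv |>.mul
        (continuousOn_gdot hΩ hv.smooth hu.smooth)).aestronglyMeasurable hΩ.measurableSet)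
      (Integrable.add hIv hIu) (fun n => Eventually.of_forall fun x => ?_) ?_
    · rw [Real.norm_eq_abs, abs_mul, abs_of_nonneg (cutoff_nonneg _ _)]
      exact (mul_le_of_le_one_left (abs_nonneg _) (cutoff_le_one _ _)).trans (abs_gdot_le _ _ _)
    · filter_upwards [ae_fderiv_eq_zero hN hΩ hv.smooth] with x hx
      by_cases h0 : v x = 0
      · simp [gdot, hx h0]
      · simpa using (tendsto_cutoff h0).mul_const (gdot v u x)
  refine tendsto_nhds_unique h1 (h2.congr fun n => ?_)
  exact (green_tru hΩ hb hu hv (lvl_pos n)).symm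

end

/-! ### Mollification -/

/-- Compactly supported `C¹` functions are `C¹`-uniform limits of test functions. -/
lemma exists_testFun_near {N : ℕ} {Ω : Set (Euc N)} (hΩ : IsOpen Ω) {g : Euc N → ℝ}
    (hg : ContDiff ℝ 1 g) (hc : HasCompactSupport g) (hs : tsupport g ⊆ Ω) {δ : ℝ} (hδ : 0 < δ) :
    ∃ φ : Euc N → ℝ, TestFun Ω φ ∧ (∀ x, |φ x - g x| ≤ δ) ∧
      ∀ x, ‖fderiv ℝ φ x - fderiv ℝ g x‖ ≤ δ := by
  have hdg : Continuous (fderiv ℝ g) := hg.continuous_fderiv (by norm_num)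
  obtain ⟨r1, hr1, h1⟩ := Metric.uniformContinuous_iff.1
    (hc.uniformContinuous_of_continuous hg.continuous) δ hδ
  obtain ⟨r2, hr2, h2⟩ := Metric.uniformContinuous_iff.1
    ((hc.fderiv ℝ).uniformContinuous_of_continuous hdg) δ hδ
  obtain ⟨r3, hr3, h3⟩ := hc.isCompact.exists_cthickening_subset_open hΩ hs
  have hr : 0 < min r1 (min r2 r3) := lt_min hr1 (lt_min hr2 hr3)
  set r := min r1 (min r2 r3) with hrdef
  let b : ContDiffBump (0 : Euc N) := ⟨r / 2, r, by linarith, by linarith⟩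
  have hbr : b.rOut = r := rfl
  set φ : Euc N → ℝ :=
    convolution (b.normed volume) g (ContinuousLinearMap.lsmul ℝ ℝ) volume with hφ
  have hsub : tsupport φ ⊆ Metric.cthickening r (tsupport g) := by
    refine closure_minimal ?_ Metric.isClosed_cthickening
    refine (support_convolution_subset _).trans ?_
    rintro _ ⟨y, hy, z, hz, rfl⟩
    rw [b.support_normed_eq, hbr, Metric.mem_ball, dist_zero_right] at hy
    refine Metric.mem_cthickening_of_dist_le _ z _ _ (subset_tsupport _ hz) ?_
    simpa using hy.le
  have hφs : tsupport φ ⊆ Ω :=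
    hsub.trans ((Metric.cthickening_mono ((min_le_right _ _).trans (min_le_right _ _)) _).trans h3)
  have hφc : HasCompactSupport φ := b.hasCompactSupport_normed.convolution _ hc
  have hφd : ContDiff ℝ (⊤ : ℕ∞) φ :=
    b.hasCompactSupport_normed.contDiff_convolution_left _ b.contDiff_normed
      hg.continuous.locallyIntegrable
  refine ⟨φ, ⟨hφd, hφc, hφs⟩, fun x => ?_, fun x => ?_⟩
  · refine b.dist_normed_convolution_le hg.continuous.aestronglyMeasurable fun y hy => ?_
    exact (h1 (lt_of_lt_of_le (Metric.mem_ball.1 hy) (min_le_left _ _))).le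
  · have hd := hc.hasFDerivAt_convolution_right (ContinuousLinearMap.lsmul ℝ ℝ)
      ((b.continuous_normed (μ := volume)).locallyIntegrable (μ := volume)) hg x
    have hL : (ContinuousLinearMap.lsmul ℝ ℝ : ℝ →L[ℝ] ℝ →L[ℝ] ℝ).precompR (Euc N) =
        (ContinuousLinearMap.lsmul ℝ ℝ : ℝ →L[ℝ] (Euc N →L[ℝ] ℝ) →L[ℝ] (Euc N →L[ℝ] ℝ)) := by
      ext a T; simp
    rw [hL] at hd
    rw [hd.fderiv, ← dist_eq_norm]
    refine b.dist_normed_convolution_le hdg.aestronglyMeasurable fun y hy => ?_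
    exact (h2 (lt_of_lt_of_le (Metric.mem_ball.1 hy)
      ((min_le_right _ _).trans (min_le_left _ _)))).le

/-! ### The weighted spectral inequality -/

section
variable {N : ℕ} {Ω : Set (Euc N)} {p lam α : ℝ} {ψ : Euc N → ℝ}

lemma rhoq_nonneg (x : Euc N) : 0 ≤ rhoq p lam α ψ x :=
  Real.rpow_nonneg (le_max_right _ _) _

lemma continuousOn_rhoq {s : Set (Euc N)} (hp : 1 < p) (hψ : ContinuousOn ψ s) :
    ContinuousOn (rhoq p lam α ψ) s := by
  unfold rhoq
  refine ContinuousOn.rpow_const (by fun_prop) fun x _ => Or.inr (by linarith)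

lemma continuousOn_rho {s : Set (Euc N)} (hp : 1 < p) (hψ : ContinuousOn ψ s) :
    ContinuousOn (rho p lam α ψ) s := by
  unfold rho
  refine ContinuousOn.rpow_const (by fun_prop) fun x _ => Or.inr (by linarith)

lemma wdenom_nonneg (φ : Euc N → ℝ) : 0 ≤ wdenom Ω p lam α ψ φ :=
  integral_nonneg fun x => mul_nonneg (rhoq_nonneg x) (sq_nonneg _)

/-- The weighted variance is continuous under bounded pointwise convergence. -/
lemma tendsto_wdenom (hΩ : IsOpen Ω) (hb : Bornology.IsBounded Ω) (hp : 1 < p)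
    (hψ : ContinuousOn ψ (closure Ω)) {φ : ℕ → Euc N → ℝ} {g : Euc N → ℝ} {M : ℝ}
    (hφ : ∀ n, ContinuousOn (φ n) Ω) (hM : ∀ n, ∀ x ∈ Ω, |φ n x| ≤ M)
    (hlim : ∀ x ∈ Ω, Tendsto (fun n => φ n x) atTop (𝓝 (g x))) :
    Tendsto (fun n => wdenom Ω p lam α ψ (φ n)) atTop (𝓝 (wdenom Ω p lam α ψ g)) := by
  have hw := continuousOn_rhoq (p := p) (lam := lam) (α := α) hp hψ
  have hwΩ := hw.mono (subset_closure (s := Ω))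
  have hwI : IntegrableOn (rhoq p lam α ψ) Ω := integrableOn_of_cont hb hw
  have havg : Tendsto (fun n => avgl Ω p lam α ψ (φ n)) atTop (𝓝 (avgl Ω p lam α ψ g)) := by
    refine Tendsto.div_const ?_ _
    refine tendsto_integral_of_dominated_convergence (fun x => rhoq p lam α ψ x * M)
      (fun n => (hwΩ.mul (hφ n)).aestronglyMeasurable hΩ.measurableSet)
      (hwI.mul_const M) (fun n => ?_) ?_
    · filter_upwards [ae_restrict_mem hΩ.measurableSet] with x hx
      rw [Real.norm_eq_abs, abs_mul, abs_of_nonneg (rhoq_nonneg x)]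
      exact mul_le_mul_of_nonneg_left (hM n x hx) (rhoq_nonneg x)
    · filter_upwards [ae_restrict_mem hΩ.measurableSet] with x hx
      exact (hlim x hx).const_mul _
  obtain ⟨A, hA⟩ := (Metric.isBounded_range_of_tendsto _ havg).exists_norm_le
  have hA' : ∀ n, |avgl Ω p lam α ψ (φ n)| ≤ A := fun n => hA _ (mem_range_self n)
  refine tendsto_integral_of_dominated_convergence (fun x => rhoq p lam α ψ x * (M + A) ^ 2)
    (fun n => (hwΩ.mul (((hφ n).sub continuousOn_const).pow 2)).aestronglyMeasurable
      hΩ.measurableSet)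
    (hwI.mul_const _) (fun n => ?_) ?_
  · filter_upwards [ae_restrict_mem hΩ.measurableSet] with x hx
    rw [Real.norm_eq_abs, abs_mul, abs_of_nonneg (rhoq_nonneg x), abs_pow]
    refine mul_le_mul_of_nonneg_left (pow_le_pow_left₀ (abs_nonneg _) ?_ 2) (rhoq_nonneg x)
    exact (abs_sub _ _).trans (add_le_add (hM n x hx) (hA' n))
  · filter_upwards [ae_restrict_mem hΩ.measurableSet] with x hx
    exact (((hlim x hx).sub havg).pow 2).const_mul _

/-- Positivity of `σ₁` gives the spectral inequality on test functions. -/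
lemma spectral_test (hσ : 0 < sigma1 Ω p lam α ψ)
    {φ : Euc N → ℝ} (hφ : TestFun Ω φ) :
    lam * p * wdenom Ω p lam α ψ φ ≤ ∫ x in Ω, ‖fderiv ℝ φ x‖ ^ 2 := by
  have hG : 0 ≤ ∫ x in Ω, ‖fderiv ℝ φ x‖ ^ 2 := integral_nonneg fun x => by positivity
  rcases (wdenom_nonneg (Ω := Ω) (p := p) (lam := lam) (α := α) (ψ := ψ) φ).eq_or_lt with h | h
  · rw [← h]; simpa using hG
  have hbdd : BddBelow {s | ∃ φ : Euc N → ℝ, TestFun Ω φ ∧ 0 < wdenom Ω p lam α ψ φ ∧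
      s = rayleigh Ω p lam α ψ φ} := by
    refine ⟨-(lam * p), ?_⟩
    rintro s ⟨χ, -, hχ, rfl⟩
    have hG' : 0 ≤ ∫ x in Ω, ‖fderiv ℝ χ x‖ ^ 2 := integral_nonneg fun x => by positivity
    rw [rayleigh, le_div_iff₀ hχ]
    linarith
  have h1 : 0 < rayleigh Ω p lam α ψ φ :=
    hσ.trans_le (csInf_le hbdd ⟨φ, hφ, h, rfl⟩)
  rw [rayleigh, div_pos_iff_of_pos_right h] at h1
  linarith

/-- The spectral inequality for compactly supported `C¹` functions. -/
lemma spectral_C1 (hΩ : IsOpen Ω) (hb : Bornology.IsBounded Ω) (hp : 1 < p)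
    (hψ : ContinuousOn ψ (closure Ω)) (hσ : 0 < sigma1 Ω p lam α ψ)
    {g : Euc N → ℝ} (hg : ContDiff ℝ 1 g) (hc : HasCompactSupport g) (hs : tsupport g ⊆ Ω) :
    lam * p * wdenom Ω p lam α ψ g ≤ ∫ x in Ω, ‖fderiv ℝ g x‖ ^ 2 := by
  have hdg : Continuous (fderiv ℝ g) := hg.continuous_fderiv (by norm_num)
  choose φ hφt hφ0 hφ1 using fun n : ℕ => exists_testFun_near hΩ hg hc hs (lvl_pos n)
  obtain ⟨M, hM⟩ := hc.exists_bound_of_continuous hg.continuous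
  obtain ⟨K, hK⟩ := (hc.fderiv ℝ).exists_bound_of_continuous hdg
  have hl1 : ∀ n, lvl n ≤ 1 := fun n => by
    unfold lvl; rw [div_le_one (by positivity)]; linarith [(Nat.cast_nonneg n : (0:ℝ) ≤ n)]
  have hφd : ∀ n, Continuous (fderiv ℝ (φ n)) := fun n =>
    (hφt n).1.continuous_fderiv (by simp)
  have hfin : IsFiniteMeasure (volume.restrict Ω) :=
    ⟨by simpa using hb.measure_lt_top (μ := volume)⟩
  have h1 : Tendsto (fun n => wdenom Ω p lam α ψ (φ n)) atTop (𝓝 (wdenom Ω p lam α ψ g)) := by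
    refine tendsto_wdenom hΩ hb hp hψ (M := M + 1)
      (fun n => (hφt n).1.continuous.continuousOn) (fun n x _ => ?_) (fun x _ => ?_)
    · have e1 := hφ0 n x
      have e2 : |g x| ≤ M := hM x
      have e3 := hl1 n
      calc |φ n x| = |g x + (φ n x - g x)| := by ring_nf
        _ ≤ |g x| + |φ n x - g x| := abs_add_le _ _
        _ ≤ M + 1 := by linarith
    · rw [tendsto_iff_dist_tendsto_zero]
      exact squeeze_zero (fun _ => dist_nonneg) (fun n => hφ0 n x) tendsto_lvl
  have h2 : Tendsto (fun n => ∫ x in Ω, ‖fderiv ℝ (φ n) x‖ ^ 2) atTop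
      (𝓝 (∫ x in Ω, ‖fderiv ℝ g x‖ ^ 2)) := by
    refine tendsto_integral_of_dominated_convergence (fun _ => (K + 1) ^ 2)
      (fun n => ((hφd n).norm.pow 2).aestronglyMeasurable) (integrable_const _)
      (fun n => Eventually.of_forall fun x => ?_) (Eventually.of_forall fun x => ?_)
    · rw [norm_pow, norm_norm]
      refine pow_le_pow_left₀ (norm_nonneg _) ?_ 2
      have e1 := hφ1 n x
      have e2 := hK x
      have e3 := hl1 n
      calc ‖fderiv ℝ (φ n) x‖ = ‖fderiv ℝ g x + (fderiv ℝ (φ n) x - fderiv ℝ g x)‖ := by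
            congr 1; abel
        _ ≤ ‖fderiv ℝ g x‖ + ‖fderiv ℝ (φ n) x - fderiv ℝ g x‖ := norm_add_le _ _
        _ ≤ K + 1 := by linarith
    · refine Tendsto.pow (Tendsto.norm ?_) 2
      rw [tendsto_iff_norm_sub_tendsto_zero]
      exact squeeze_zero (fun _ => norm_nonneg _) (fun n => hφ1 n x) tendsto_lvl
  exact le_of_tendsto_of_tendsto' (h1.const_mul _) h2 fun n => spectral_test hσ (hφt n)

/-- The spectral inequality in the class `Nice`: truncation only decreases the Dirichlet energy. -/
lemma spectral_nice (hN : 2 ≤ N) (hΩ : IsOpen Ω) (hb : Bornology.IsBounded Ω)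
    (hp : 1 < p) (hψ : ContinuousOn ψ (closure Ω)) (hσ : 0 < sigma1 Ω p lam α ψ)
    {u f : Euc N → ℝ} (hu : Nice Ω u f) :
    lam * p * wdenom Ω p lam α ψ u ≤ ∫ x in Ω, ‖fderiv ℝ u x‖ ^ 2 := by
  obtain ⟨M, hM0, hM⟩ := exists_bound hb hu.cont
  have h1 : Tendsto (fun n => wdenom Ω p lam α ψ (tru Ω (lvl n) u)) atTop
      (𝓝 (wdenom Ω p lam α ψ u)) := by
    refine tendsto_wdenom hΩ hb hp hψ (M := M)
      (fun n => (contDiff_tru hΩ hu (lvl_pos n)).continuous.continuousOn)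
      (fun n x hx => ?_) (fun x hx => ?_)
    · rw [tru, indicator_of_mem hx]
      exact (abs_trunc_le _ _).trans (hM x hx)
    · simp only [tru, indicator_of_mem hx]
      exact tendsto_trunc _
  refine le_of_tendsto' (h1.const_mul _) fun n => ?_
  refine (spectral_C1 hΩ hb hp hψ hσ (contDiff_tru hΩ hu (lvl_pos n))
    (hasCompactSupport_tru hΩ hb hu (lvl_pos n)) (tsupport_tru hΩ hu (lvl_pos n))).trans ?_
  refine integral_mono_of_nonneg (Eventually.of_forall fun x => by positivity)
    (integrable_grad hN hΩ hb hu) ?_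
  filter_upwards [ae_restrict_mem hΩ.measurableSet] with x hx
  simp only [fderiv_tru hΩ hu hx, norm_smul]
  refine pow_le_pow_left₀ (by positivity) ?_ 2
  rw [Real.norm_of_nonneg (cutoff_nonneg _ _)]
  exact mul_le_of_le_one_left (norm_nonneg _) (cutoff_le_one _ _)

/-- The weight is not a.e. zero, since `ρ` has mass one. -/
lemma integral_rhoq_ne_zero (hb : Bornology.IsBounded Ω) (hp : 1 < p)
    (hψ : ContinuousOn ψ (closure Ω)) (hmass : ∫ x in Ω, rho p lam α ψ x = 1) :
    ∫ x in Ω, rhoq p lam α ψ x ≠ 0 := by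
  intro h0
  rw [integral_eq_zero_iff_of_nonneg (fun x => rhoq_nonneg x)
    (integrableOn_of_cont hb (continuousOn_rhoq hp hψ))] at h0
  have : ∫ x in Ω, rho p lam α ψ x = 0 := by
    refine integral_eq_zero_of_ae ?_
    filter_upwards [h0] with x hx
    have h1 : max (α + lam * ψ x) 0 = 0 :=
      ((Real.rpow_eq_zero_iff_of_nonneg (le_max_right _ _)).1 hx).1
    simp [rho, h1, Real.zero_rpow (show p ≠ 0 by linarith)]
  linarith

lemma integral_rhoq_brk (hb : Bornology.IsBounded Ω) (hp : 1 < p)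
    (hψ : ContinuousOn ψ (closure Ω)) (hmass : ∫ x in Ω, rho p lam α ψ x = 1)
    {φ : Euc N → ℝ} (hφ : ContinuousOn φ (closure Ω)) :
    ∫ x in Ω, rhoq p lam α ψ x * brk Ω p lam α ψ φ x = 0 := by
  have hw := continuousOn_rhoq (p := p) (lam := lam) (α := α) hp hψ
  have hne := integral_rhoq_ne_zero hb hp hψ hmass
  simp only [brk, mul_sub]
  have hI : IntegrableOn (fun x => rhoq p lam α ψ x * φ x) Ω :=
    integrableOn_of_cont hb (hw.mul hφ)
  rw [integral_sub hI ((integrableOn_of_cont hb hw).mul_const _), integral_mul_const, avgl]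
  field_simp
  simp

/-- `ψ` is not a.e. constant for the weight: on the open set `{α + λψ > 0}` it would be
constant, hence harmonic, while `-Δψ = ρ > 0` there. -/
lemma wdenom_sol_pos (hΩ : IsOpen Ω) (hb : Bornology.IsBounded Ω) (hp : 1 < p)
    (hsol : SolP Ω p lam α ψ) : 0 < wdenom Ω p lam α ψ ψ := by
  obtain ⟨hψ, hC2, -, heq, hmass⟩ := hsol
  refine (wdenom_nonneg _).lt_of_ne' fun h0 => ?_
  have hcont : ContinuousOn (fun x => rhoq p lam α ψ x * brk Ω p lam α ψ ψ x ^ 2) (closure Ω) :=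
    (continuousOn_rhoq hp hψ).mul ((hψ.sub continuousOn_const).pow 2)
  rw [wdenom, integral_eq_zero_iff_of_nonneg
    (fun x => mul_nonneg (rhoq_nonneg x) (sq_nonneg _)) (integrableOn_of_cont hb hcont)] at h0
  have hz : ∀ x ∈ Ω, rhoq p lam α ψ x * brk Ω p lam α ψ ψ x ^ 2 = 0 :=
    Measure.eqOn_open_of_ae_eq h0 hΩ (hcont.mono subset_closure) continuousOn_const
  have hex : ∃ x ∈ Ω, 0 < α + lam * ψ x := by
    by_contra! hno
    have : ∫ x in Ω, rho p lam α ψ x = 0 := by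
      refine setIntegral_eq_zero_of_forall_eq_zero fun x hx => ?_
      simp [rho, max_eq_right (hno x hx), Real.zero_rpow (show p ≠ 0 by linarith)]
    linarith
  obtain ⟨x, hx, hpos⟩ := hex
  have hψx : ContinuousAt ψ x := hC2.continuousOn.continuousAt (hΩ.mem_nhds hx)
  have hnear : ∀ᶠ y in 𝓝 x, 0 < α + lam * ψ y :=
    (continuousAt_const.add (continuousAt_const.mul hψx)).eventually (lt_mem_nhds hpos)
  have hconst : ψ =ᶠ[𝓝 x] fun _ => avgl Ω p lam α ψ ψ := by
    filter_upwards [hnear, hΩ.mem_nhds hx] with y hy hyΩ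
    have hwy : 0 < rhoq p lam α ψ y := Real.rpow_pos_of_pos (lt_max_of_lt_left hy) _
    have := (mul_eq_zero.1 (hz y hyΩ)).resolve_left hwy.ne'
    have := pow_eq_zero_iff (two_ne_zero) |>.1 this
    simpa [brk, sub_eq_zero] using this
  have hfd : fderiv ℝ ψ =ᶠ[𝓝 x] 0 := by
    have := hconst.fderiv (𝕜 := ℝ)
    simpa using this
  have hlap : lap ψ x = 0 := by
    refine Finset.sum_eq_zero fun i _ => ?_
    have h1 : (fun y => fderiv ℝ ψ y (EuclideanSpace.single i 1)) =ᶠ[𝓝 x] fun _ => (0 : ℝ) := by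
      filter_upwards [hfd] with y hy
      simp [hy]
    rw [h1.fderiv_eq]
    simp
  have h1 := heq x hx
  rw [hlap, neg_zero] at h1
  have h2 : 0 < rho p lam α ψ x := Real.rpow_pos_of_pos (lt_max_of_lt_left hpos) _
  linarith

end

/-- energy monotonicity (pointwise form).  If `(α,ψ)` solves `(P)_λ`
with `λ > 0` and `σ₁(α,ψ) > 0`, and `η ∈ C²(Ω̄)` vanishes on `∂Ω` and satisfies
`-Δη = λp ρ_λ^{1/q}[η]_λ + p ρ_λ^{1/q}[ψ]_λ` in `Ω`, then
`∫ ρ_λ^{1/q}[η]_λ[ψ]_λ ≥ 0` and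
`∫ ρ_λ η = λp ∫ ρ_λ^{1/q}[η]_λ[ψ]_λ + p ∫ ρ_λ^{1/q}[ψ]_λ² > 0`. -/
theorem energy_monotone_pointwise
    {N : ℕ} (hN : 2 ≤ N) (Ω : Set (Euc N)) (hΩ : IsC3Domain Ω) (hvol : volume Ω = 1)
    (p : ℝ) (hp : 1 < p) (hpN : 3 ≤ N → p < (N : ℝ) / ((N : ℝ) - 2))
    (lam α : ℝ) (hlam : 0 < lam)
    (ψ : Euc N → ℝ) (hsol : SolP Ω p lam α ψ)
    (hσ : 0 < sigma1 Ω p lam α ψ)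
    (η : Euc N → ℝ)
    (hηreg : ContDiffOn ℝ 2 η (closure Ω))
    (hηbd : ∀ x ∈ frontier Ω, η x = 0)
    (hηeq : ∀ x ∈ Ω,
      -lap η x = lam * p * (rhoq p lam α ψ x * brk Ω p lam α ψ η x) +
        p * (rhoq p lam α ψ x * brk Ω p lam α ψ ψ x)) :
    0 ≤ (∫ x in Ω, rhoq p lam α ψ x * brk Ω p lam α ψ η x * brk Ω p lam α ψ ψ x) ∧
    (∫ x in Ω, rho p lam α ψ x * η x) =
      lam * p *
        (∫ x in Ω, rhoq p lam α ψ x * brk Ω p lam α ψ η x * brk Ω p lam α ψ ψ x) +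
      p * (∫ x in Ω, rhoq p lam α ψ x * brk Ω p lam α ψ ψ x ^ 2) ∧
    0 < ∫ x in Ω, rho p lam α ψ x * η x := by
  obtain ⟨hopen, -, hb, -⟩ := hΩ
  obtain ⟨hψ, hψ2, hψ0, hψeq, hmass⟩ := id hsol
  have hη := hηreg.continuousOn
  have hw := continuousOn_rhoq (p := p) (lam := lam) (α := α) hp hψ
  set w := rhoq p lam α ψ with hwdef
  set bη := brk Ω p lam α ψ η with hbη
  set bψ := brk Ω p lam α ψ ψ with hbψ
  have hcη : ContinuousOn bη (closure Ω) := hη.sub continuousOn_const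
  have hcψ : ContinuousOn bψ (closure Ω) := hψ.sub continuousOn_const
  have nψ : Nice Ω ψ (rho p lam α ψ) := ⟨hψ2, hψ, hψ0, hψeq, continuousOn_rho hp hψ⟩
  have nη : Nice Ω η (fun x => lam * p * (w x * bη x) + p * (w x * bψ x)) :=
    ⟨hηreg.mono subset_closure, hη, hηbd, hηeq, by fun_prop⟩
  have zη : ∫ x in Ω, w x * bη x = 0 := integral_rhoq_brk hb hp hψ hmass hη
  have zψ : ∫ x in Ω, w x * bψ x = 0 := integral_rhoq_brk hb hp hψ hmass hψ
  -- testing the equation of `η`: constants are invisible, so `u` may be replaced by `[u]_λ`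
  have test : ∀ u : Euc N → ℝ, ContinuousOn u (closure Ω) → ∀ c : ℝ,
      ∫ x in Ω, u x * (lam * p * (w x * bη x) + p * (w x * bψ x)) =
        lam * p * (∫ x in Ω, w x * bη x * (u x - c)) + p * ∫ x in Ω, w x * bψ x * (u x - c) := by
    intro u hu c
    have e : ∀ x, u x * (lam * p * (w x * bη x) + p * (w x * bψ x)) =
        lam * p * (w x * bη x * (u x - c)) + p * (w x * bψ x * (u x - c)) +
          (lam * p * c * (w x * bη x) + p * c * (w x * bψ x)) := fun x => by ring
    have I1 : IntegrableOn (fun x => lam * p * (w x * bη x * (u x - c))) Ω :=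
      integrableOn_of_cont hb (by fun_prop)
    have I2 : IntegrableOn (fun x => p * (w x * bψ x * (u x - c))) Ω :=
      integrableOn_of_cont hb (by fun_prop)
    have I3 : IntegrableOn (fun x => lam * p * c * (w x * bη x)) Ω :=
      integrableOn_of_cont hb (by fun_prop)
    have I4 : IntegrableOn (fun x => p * c * (w x * bψ x)) Ω :=
      integrableOn_of_cont hb (by fun_prop)
    simp only [e]
    rw [integral_add (Integrable.fun_add I1 I2) (Integrable.fun_add I3 I4), integral_add I1 I2, integral_add I3 I4]
    simp only [integral_const_mul, zη, zψ]
    ring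
  have hpp : 0 < p := by linarith
  have part1 : 0 ≤ ∫ x in Ω, w x * bη x * bψ x := by
    have h1 := test η hη (avgl Ω p lam α ψ η)
    have h2 := green hN hopen hb nη nη
    have h3 := spectral_nice hN hopen hb hp hψ hσ nη
    rw [h2] at h1
    simp only [gdot_self] at h1
    have e1 : ∫ x in Ω, w x * bη x * (η x - avgl Ω p lam α ψ η) = wdenom Ω p lam α ψ η := by
      refine integral_congr_ae (Eventually.of_forall fun x => ?_)
      simp only [hbη, hwdef, brk]; ring
    have e2 : ∫ x in Ω, w x * bψ x * (η x - avgl Ω p lam α ψ η) =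
        ∫ x in Ω, w x * bη x * bψ x := by
      refine integral_congr_ae (Eventually.of_forall fun x => ?_)
      simp only [hbη, brk]; ring
    rw [e1, e2] at h1
    have : 0 ≤ p * ∫ x in Ω, w x * bη x * bψ x := by linarith
    exact nonneg_of_mul_nonneg_right this hpp
  have part2 : (∫ x in Ω, rho p lam α ψ x * η x) =
      lam * p * (∫ x in Ω, w x * bη x * bψ x) + p * (∫ x in Ω, w x * bψ x ^ 2) := by
    have h1 := test ψ hψ (avgl Ω p lam α ψ ψ)
    have h2 := green hN hopen hb nη nψ
    have h3 := green hN hopen hb nψ nη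
    simp only [gdot_comm η ψ] at h3
    have e3 : ∫ x in Ω, w x * bψ x * (ψ x - avgl Ω p lam α ψ ψ) = ∫ x in Ω, w x * bψ x ^ 2 := by
      refine integral_congr_ae (Eventually.of_forall fun x => ?_)
      simp only [hbψ, brk]; ring
    rw [← e3]
    refine Eq.trans ?_ h1
    rw [h2, ← h3]
    exact integral_congr_ae (Eventually.of_forall fun x => mul_comm _ _)
  refine ⟨part1, part2, ?_⟩
  have hpos : 0 < ∫ x in Ω, w x * bψ x ^ 2 := wdenom_sol_pos hopen hb hp hsol
  rw [part2]
  positivity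

end
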